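/- Let ρ, ν be compactly supported probability measures on ℝ^d with noised densities ρ_σ, ν_σ > 0 and scores s^ρ, s^ν, and let s^η be the score of (1-η)ρ_σ + ην_σ. Define g(z) = (ν_σ(z)/ρ_σ(z))(s^ν(z) − s^ρ(z)). Then the difference quotients F_h(z) = (s^h(z) − s^0(z))/h converge to g(z) pointwise as h → 0⁺, and there is a dominating function G(z) = (2/ρ_σ(z))((ρ_σ(z)/σ²)(2D^ρ + D^ν) + (ν_σ(z)/σ²)(2D^ν + D^ρ)) with ‖F_h(z)‖ ≤ G(z) for all z and all sufficiently small h > 0, where D^ρ, D^ν bound the norms of the Gaussian-weighted barycenters of ρ and ν. Consequently, by dominated convergence, ∫ ‖F_h(z) − g(z)‖² ρ_σ(z) dz → 0 as h → 0⁺, i.e., (s^h − s^0)/h → g in L²(ℝ^d, ρ_σ). -/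

import Mathlib

open MeasureTheory Real

open Filter Set Topology

/-!
Write `m_h = (1 - h) p + h q` for the mixture of two positive densities. Its score is the average
of the scores of `p` and `q` with weights `(1 - h) p / m_h` and `h q / m_h`, so the difference
quotient equals `(p / m_h) g` with `g = (q / p) (s^q - s^p)`. Since `m_h ≥ p / 2` for `h ≤ 1 / 2`,
the quotients are dominated by `2 ‖g‖` and their errors by `‖g‖`, and everything reduces to
`g ∈ L²(p)`.

For Gaussian-noised densities, Tweedie's formula `s^μ(z) = σ⁻² (E[X | Z = z] - z)` makes the terms
`-σ⁻² z` of the two scores cancel. Hence `‖g‖² p ≤ ((D^ρ + D^ν) / σ²)² q² / p`, and `q² / p` has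
Gaussian decay, because `p` and `q` are both `exp (-‖z‖² / (2 σ²) + O(‖z‖))`.
-/

section Mixture

variable {E : Type*} [NormedAddCommGroup E] [InnerProductSpace ℝ E] [CompleteSpace E]

/-- The (Stein) score `∇ log p` of a density `p`. -/
noncomputable def score (p : E → ℝ) (z : E) : E :=
  gradient (fun y => log (p y)) z

/-- The mixture `(1 - η) p + η q` of two densities. -/
def mixture {α : Type*} (p q : α → ℝ) (η : ℝ) (z : α) : ℝ :=
  (1 - η) * p z + η * q z

/-- The difference quotient `(s^h - s^0) / h` of the scores `s^η` of the mixtures of `p` and `q`;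
the score `s^0` of the mixture with weight `0` is written as the score of `p`. -/
noncomputable def scoreQuotient (p q : E → ℝ) (h : ℝ) (z : E) : E :=
  h⁻¹ • (score (mixture p q h) z - score p z)

/-- The derivative `(q / p) (s^q - s^p)` at `h = 0` of the score of the mixture of `p` and `q`. -/
noncomputable def scoreDerivative (p q : E → ℝ) (z : E) : E :=
  (q z / p z) • (score q z - score p z)

variable {p q : E → ℝ} {z : E} {h : ℝ}

theorem score_eq_inv_smul_gradient (hp : DifferentiableAt ℝ p z) (hpz : p z ≠ 0) :
    score p z = (p z)⁻¹ • gradient p z := by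
  simp [score, gradient, fderiv.log hp hpz]

theorem gradient_mixture (hp : DifferentiableAt ℝ p z) (hq : DifferentiableAt ℝ q z) :
    gradient (mixture p q h) z = (1 - h) • gradient p z + h • gradient q z := by
  have hfderiv : fderiv ℝ (mixture p q h) z = (1 - h) • fderiv ℝ p z + h • fderiv ℝ q z :=
    ((hp.hasFDerivAt.const_mul (1 - h)).add (hq.hasFDerivAt.const_mul h)).fderiv
  simp [gradient, hfderiv]

theorem score_mixture (hp : DifferentiableAt ℝ p z) (hq : DifferentiableAt ℝ q z)
    (hpz : p z ≠ 0) (hqz : q z ≠ 0) (hmz : mixture p q h z ≠ 0) :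
    score (mixture p q h) z =
      ((1 - h) * p z / mixture p q h z) • score p z +
        (h * q z / mixture p q h z) • score q z := by
  have hm : DifferentiableAt ℝ (mixture p q h) z := (hp.const_mul (1 - h)).add (hq.const_mul h)
  rw [score_eq_inv_smul_gradient hm hmz, gradient_mixture hp hq,
    score_eq_inv_smul_gradient hp hpz, score_eq_inv_smul_gradient hq hqz]
  match_scalars <;> field_simp

theorem scoreQuotient_eq_smul_scoreDerivative (hp : DifferentiableAt ℝ p z)
    (hq : DifferentiableAt ℝ q z) (hpz : p z ≠ 0) (hqz : q z ≠ 0) (hmz : mixture p q h z ≠ 0)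
    (hh : h ≠ 0) :
    scoreQuotient p q h z = (p z / mixture p q h z) • scoreDerivative p q z := by
  have hweights : (1 - h) * p z / mixture p q h z = 1 - h * q z / mixture p q h z := by
    rw [eq_sub_iff_add_eq, ← add_div]
    exact div_self hmz
  rw [scoreQuotient, scoreDerivative, score_mixture hp hq hpz hqz hmz, hweights]
  match_scalars <;> field_simp
  ring

theorem half_lt_mixture {α : Type*} {p q : α → ℝ} {z : α} (hpz : 0 < p z) (hqz : 0 < q z)
    (hh : h ∈ Ioo 0 (1 / 2)) : p z / 2 < mixture p q h z := by
  have hph : p z / 2 < (1 - h) * p z := by nlinarith [hh.2]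
  have hqh : 0 < h * q z := mul_pos hh.1 hqz
  simp only [mixture]
  linarith

theorem div_mixture_mem_Ioo {α : Type*} {p q : α → ℝ} {z : α} (hpz : 0 < p z) (hqz : 0 < q z)
    (hh : h ∈ Ioo 0 (1 / 2)) : p z / mixture p q h z ∈ Ioo 0 2 := by
  have hm := half_lt_mixture hpz hqz hh
  have hm₀ : 0 < mixture p q h z := by linarith
  exact ⟨div_pos hpz hm₀, by rw [div_lt_iff₀ hm₀]; linarith⟩

theorem exists_scoreQuotient_eq_smul (hp : DifferentiableAt ℝ p z) (hq : DifferentiableAt ℝ q z)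
    (hpz : 0 < p z) (hqz : 0 < q z) (hh : h ∈ Ioo 0 (1 / 2)) :
    ∃ r ∈ Ioo (0 : ℝ) 2, scoreQuotient p q h z = r • scoreDerivative p q z := by
  have hm₀ : 0 < mixture p q h z := (half_pos hpz).trans (half_lt_mixture hpz hqz hh)
  exact ⟨_, div_mixture_mem_Ioo hpz hqz hh,
    scoreQuotient_eq_smul_scoreDerivative hp hq hpz.ne' hqz.ne' hm₀.ne' hh.1.ne'⟩

theorem norm_scoreQuotient_le (hp : DifferentiableAt ℝ p z) (hq : DifferentiableAt ℝ q z)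
    (hpz : 0 < p z) (hqz : 0 < q z) (hh : h ∈ Ioo 0 (1 / 2)) :
    ‖scoreQuotient p q h z‖ ≤ 2 * ‖scoreDerivative p q z‖ := by
  obtain ⟨r, ⟨hr₀, hr₂⟩, hr⟩ := exists_scoreQuotient_eq_smul hp hq hpz hqz hh
  rw [hr, norm_smul, norm_of_nonneg hr₀.le]
  gcongr

theorem norm_scoreQuotient_sub_scoreDerivative_le (hp : DifferentiableAt ℝ p z)
    (hq : DifferentiableAt ℝ q z) (hpz : 0 < p z) (hqz : 0 < q z) (hh : h ∈ Ioo 0 (1 / 2)) :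
    ‖scoreQuotient p q h z - scoreDerivative p q z‖ ≤ ‖scoreDerivative p q z‖ := by
  obtain ⟨r, ⟨hr₀, hr₂⟩, hr⟩ := exists_scoreQuotient_eq_smul hp hq hpz hqz hh
  have hr₁ : ‖r - 1‖ ≤ 1 := abs_le.2 ⟨by linarith, by linarith⟩
  calc ‖scoreQuotient p q h z - scoreDerivative p q z‖
      = ‖r - 1‖ * ‖scoreDerivative p q z‖ := by rw [hr, ← norm_smul, sub_smul, one_smul]
    _ ≤ ‖scoreDerivative p q z‖ := mul_le_of_le_one_left (norm_nonneg _) hr₁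

theorem tendsto_scoreQuotient (hp : DifferentiableAt ℝ p z) (hq : DifferentiableAt ℝ q z)
    (hpz : p z ≠ 0) (hqz : q z ≠ 0) :
    Tendsto (fun h => scoreQuotient p q h z) (𝓝[≠] 0) (𝓝 (scoreDerivative p q z)) := by
  have hm : Tendsto (fun h => mixture p q h z) (𝓝[≠] 0) (𝓝 (p z)) := by
    have hcont : Continuous fun h => mixture p q h z := by unfold mixture; fun_prop
    simpa [mixture] using (hcont.tendsto 0).mono_left nhdsWithin_le_nhds
  have hratio : Tendsto (fun h => p z / mixture p q h z) (𝓝[≠] 0) (𝓝 1) := by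
    rw [← div_self hpz]
    exact tendsto_const_nhds.div hm hpz
  have hlim := hratio.smul_const (scoreDerivative p q z)
  rw [one_smul] at hlim
  refine hlim.congr' ?_
  filter_upwards [hm.eventually_ne hpz, self_mem_nhdsWithin] with h hmz hh
  exact (scoreQuotient_eq_smul_scoreDerivative hp hq hpz hqz hmz hh).symm

section Measurable

variable [MeasurableSpace E] [BorelSpace E]

theorem measurable_score (p : E → ℝ) : Measurable (score p) :=
  (InnerProductSpace.toDual ℝ E).symm.continuous.measurable.comp (measurable_fderiv ℝ _)

variable [SecondCountableTopology E]

theorem measurable_scoreQuotient (p q : E → ℝ) (h : ℝ) : Measurable (scoreQuotient p q h) :=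
  ((measurable_score _).sub (measurable_score p)).const_smul h⁻¹

theorem measurable_scoreDerivative (hp : Measurable p) (hq : Measurable q) :
    Measurable (scoreDerivative p q) :=
  (hq.div hp).smul ((measurable_score q).sub (measurable_score p))

theorem tendsto_integral_norm_scoreQuotient_sub_sq {μ : Measure E} (hp : Differentiable ℝ p)
    (hq : Differentiable ℝ q) (hp₀ : ∀ z, 0 < p z) (hq₀ : ∀ z, 0 < q z)
    (hint : Integrable (fun z => ‖scoreDerivative p q z‖ ^ 2 * p z) μ) :
    Tendsto (fun h => ∫ z, ‖scoreQuotient p q h z - scoreDerivative p q z‖ ^ 2 * p z ∂μ)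
      (𝓝[>] 0) (𝓝 0) := by
  have hpm : Measurable p := hp.continuous.measurable
  have hgm := measurable_scoreDerivative hpm hq.continuous.measurable
  have hsmall : ∀ᶠ h : ℝ in 𝓝[>] 0, h ∈ Ioo (0 : ℝ) (1 / 2) := Ioo_mem_nhdsGT one_half_pos
  have hmeas (h : ℝ) : AEStronglyMeasurable
      (fun z => ‖scoreQuotient p q h z - scoreDerivative p q z‖ ^ 2 * p z) μ :=
    ((((measurable_scoreQuotient p q h).sub hgm).norm.pow_const 2).mul hpm).aestronglyMeasurable
  have hbound : ∀ᶠ h in 𝓝[>] 0, ∀ᵐ z ∂μ,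
      ‖‖scoreQuotient p q h z - scoreDerivative p q z‖ ^ 2 * p z‖ ≤
        ‖scoreDerivative p q z‖ ^ 2 * p z := by
    filter_upwards [hsmall] with h hh
    refine .of_forall fun z => ?_
    have hpz := (hp₀ z).le
    rw [norm_of_nonneg (by positivity)]
    gcongr
    exact norm_scoreQuotient_sub_scoreDerivative_le (hp z) (hq z) (hp₀ z) (hq₀ z) hh
  have hlim (z : E) : Tendsto
      (fun h => ‖scoreQuotient p q h z - scoreDerivative p q z‖ ^ 2 * p z) (𝓝[>] 0) (𝓝 0) := by
    have htendsto := (tendsto_scoreQuotient (hp z) (hq z) (hp₀ z).ne' (hq₀ z).ne').mono_left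
      (nhdsGT_le_nhdsNE 0)
    simpa using ((htendsto.sub_const (scoreDerivative p q z)).norm.pow 2).mul_const (p z)
  simpa only [integral_zero] using tendsto_integral_filter_of_dominated_convergence _
    (.of_forall hmeas) hbound hint (.of_forall hlim)

end Measurable

end Mixture

section NoisedDensity

variable {E : Type*} [NormedAddCommGroup E] {c σ D : ℝ} {x z : E}

/-- The exponent `-‖z - x‖² / (2 σ²)` of the Gaussian density of variance `σ²` centered at `x`. -/
noncomputable def gaussianExponent (σ : ℝ) (z x : E) : ℝ :=
  -‖z - x‖ ^ 2 / (2 * σ ^ 2)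

theorem gaussianExponent_nonpos : gaussianExponent σ z x ≤ 0 :=
  div_nonpos_of_nonpos_of_nonneg (by simp) (by positivity)

theorem neg_add_sq_div_le_gaussianExponent (hx : ‖x‖ ≤ D) :
    -(‖z‖ + D) ^ 2 / (2 * σ ^ 2) ≤ gaussianExponent σ z x := by
  have hzx : ‖z - x‖ ≤ ‖z‖ + D := (norm_sub_le z x).trans (by gcongr)
  unfold gaussianExponent
  gcongr

theorem gaussianExponent_le (hx : ‖x‖ ≤ D) :
    gaussianExponent σ z x ≤ (2 * D * ‖z‖ - ‖z‖ ^ 2) / (2 * σ ^ 2) := by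
  have hzx : (‖z‖ - ‖x‖) ^ 2 ≤ ‖z - x‖ ^ 2 := by
    rw [sq_le_sq, abs_norm]
    exact abs_norm_sub_norm_le z x
  unfold gaussianExponent
  gcongr
  nlinarith [mul_le_mul_of_nonneg_left hx (norm_nonneg z), sq_nonneg ‖x‖]

theorem exp_gaussianExponent_mul_norm_sub_le (hσ : σ ≠ 0) :
    exp (gaussianExponent σ z x) * ‖x - z‖ ≤ |σ| := by
  have hσ₀ : 0 < |σ| := abs_pos.2 hσ
  set u := ‖x - z‖ / |σ| with hu
  have hexponent : gaussianExponent σ z x = -(u ^ 2 / 2) := by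
    rw [gaussianExponent, hu, norm_sub_rev, div_pow, sq_abs]
    field_simp
  have hu_le : u ≤ exp (u ^ 2 / 2) := by
    nlinarith [add_one_le_exp (u ^ 2 / 2), sq_nonneg (u - 1)]
  calc exp (gaussianExponent σ z x) * ‖x - z‖ = exp (-(u ^ 2 / 2)) * u * |σ| := by
        rw [hexponent, mul_assoc, hu, div_mul_cancel₀ _ hσ₀.ne']
    _ ≤ exp (-(u ^ 2 / 2)) * exp (u ^ 2 / 2) * |σ| := by gcongr
    _ = |σ| := by rw [← exp_add, neg_add_cancel, exp_zero, one_mul]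

theorem continuous_gaussianExponent (σ : ℝ) (z : E) : Continuous (gaussianExponent σ z) := by
  unfold gaussianExponent
  fun_prop

theorem hasFDerivAt_exp_gaussianExponent [InnerProductSpace ℝ E] (σ : ℝ) (z x : E) :
    HasFDerivAt (fun y => exp (gaussianExponent σ y x))
      (innerSL ℝ ((σ ^ 2)⁻¹ • exp (gaussianExponent σ z x) • (x - z))) z := by
  have hsq := (((hasFDerivAt_id z).sub_const x).norm_sq.neg.mul_const (2 * σ ^ 2)⁻¹).exp
  refine hsq.congr_fderiv ?_
  ext v
  simp only [gaussianExponent, div_eq_mul_inv, id_eq, Pi.neg_apply, neg_mul, smul_neg, map_sub,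
    map_smul, ContinuousLinearMap.comp_id, neg_apply, smul_apply, sub_apply, coe_innerSL_apply,
    nsmul_eq_mul, Nat.cast_ofNat, smul_eq_mul]
  ring

variable [MeasurableSpace E]

theorem nonneg_of_ae_norm_le {μ : Measure E} [NeZero μ] (hμ : ∀ᵐ x ∂μ, ‖x‖ ≤ D) : 0 ≤ D :=
  let ⟨x, hx⟩ := hμ.exists
  (norm_nonneg x).trans hx

/-- The density at `z` of `μ * N(0, σ² I)`. The normalizing constant `c = (2 π σ²)^(-d / 2)` is left
arbitrary, because scores do not depend on it. -/
noncomputable def noisedDensity (c σ : ℝ) (μ : Measure E) (z : E) : ℝ :=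
  ∫ x, c * exp (gaussianExponent σ z x) ∂μ

theorem noisedDensity_eq_mul_integral (c σ : ℝ) (μ : Measure E) (z : E) :
    noisedDensity c σ μ z = c * ∫ x, exp (gaussianExponent σ z x) ∂μ :=
  integral_const_mul _ _

variable [OpensMeasurableSpace E] {μ : Measure E} [IsFiniteMeasure μ]

theorem integrable_exp_gaussianExponent (μ : Measure E) [IsFiniteMeasure μ] (σ : ℝ) (z : E) :
    Integrable (fun x => exp (gaussianExponent σ z x)) μ := by
  refine .of_bound (continuous_gaussianExponent σ z).rexp.measurable.aestronglyMeasurable 1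
    (.of_forall fun x => ?_)
  simpa using gaussianExponent_nonpos

theorem noisedDensity_pos [NeZero μ] (hc : 0 < c) (z : E) : 0 < noisedDensity c σ μ z := by
  rw [noisedDensity_eq_mul_integral]
  exact mul_pos hc (integral_exp_pos (integrable_exp_gaussianExponent μ σ z))

theorem noisedDensity_le (hc : 0 ≤ c) (hμ : ∀ᵐ x ∂μ, ‖x‖ ≤ D) (z : E) :
    noisedDensity c σ μ z ≤
      c * (μ.real univ * exp ((2 * D * ‖z‖ - ‖z‖ ^ 2) / (2 * σ ^ 2))) := by
  rw [noisedDensity_eq_mul_integral, ← smul_eq_mul (μ.real univ), ← integral_const]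
  refine mul_le_mul_of_nonneg_left
    (integral_mono_ae (integrable_exp_gaussianExponent μ σ z) (integrable_const _) ?_) hc
  filter_upwards [hμ] with x hx
  exact exp_le_exp.2 (gaussianExponent_le hx)

theorem le_noisedDensity (hc : 0 ≤ c) (hμ : ∀ᵐ x ∂μ, ‖x‖ ≤ D) (z : E) :
    c * (μ.real univ * exp (-(‖z‖ + D) ^ 2 / (2 * σ ^ 2))) ≤ noisedDensity c σ μ z := by
  rw [noisedDensity_eq_mul_integral, ← smul_eq_mul (μ.real univ), ← integral_const]
  refine mul_le_mul_of_nonneg_left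
    (integral_mono_ae (integrable_const _) (integrable_exp_gaussianExponent μ σ z) ?_) hc
  filter_upwards [hμ] with x hx
  exact exp_le_exp.2 (neg_add_sq_div_le_gaussianExponent hx)

theorem sq_noisedDensity_div_le {ρ ν : Measure E} [IsFiniteMeasure ρ] [NeZero ρ]
    [IsFiniteMeasure ν] [NeZero ν] {Dρ Dν : ℝ} (hc : 0 < c) (hρ : ∀ᵐ x ∂ρ, ‖x‖ ≤ Dρ)
    (hν : ∀ᵐ x ∂ν, ‖x‖ ≤ Dν) (z : E) :
    noisedDensity c σ ν z ^ 2 / noisedDensity c σ ρ z ≤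
      c * ν.real univ ^ 2 / ρ.real univ * exp (Dρ ^ 2 / (2 * σ ^ 2)) *
        exp (-(2 * σ ^ 2)⁻¹ * ‖z‖ ^ 2 + (2 * Dν + Dρ) / σ ^ 2 * ‖z‖) := by
  set upper := exp ((2 * Dν * ‖z‖ - ‖z‖ ^ 2) / (2 * σ ^ 2)) with hupper
  set lower := exp (-(‖z‖ + Dρ) ^ 2 / (2 * σ ^ 2)) with hlower
  have hρ₀ : 0 < ρ.real univ := measureReal_univ_pos
  have hexp : upper ^ 2 / lower = exp (Dρ ^ 2 / (2 * σ ^ 2)) *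
      exp (-(2 * σ ^ 2)⁻¹ * ‖z‖ ^ 2 + (2 * Dν + Dρ) / σ ^ 2 * ‖z‖) := by
    rw [hupper, hlower, ← exp_nat_mul, ← exp_sub, ← exp_add]
    congr 1
    ring
  calc noisedDensity c σ ν z ^ 2 / noisedDensity c σ ρ z
      ≤ (c * (ν.real univ * upper)) ^ 2 / (c * (ρ.real univ * lower)) := by
        have hν₀ := (noisedDensity_pos (σ := σ) (μ := ν) hc z).le
        gcongr
        · exact noisedDensity_le hc.le hν z
        · exact le_noisedDensity hc.le hρ z
    _ = c * ν.real univ ^ 2 / ρ.real univ * (upper ^ 2 / lower) := by field_simp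
    _ = _ := by rw [hexp, mul_assoc]

section Tweedie

variable [InnerProductSpace ℝ E]

/-- The Gaussian-weighted barycenter of `μ` at `z`: the mean of `X ∼ μ` given `X + σ N = z`, with
`N` standard normal. The conditional law is encoded as an exponential tilting of `μ`. -/
noncomputable def posteriorMean (σ : ℝ) (μ : Measure E) (z : E) : E :=
  ∫ x, x ∂μ.tilted (gaussianExponent σ z)

theorem norm_posteriorMean_le [NeZero μ] (hμ : ∀ᵐ x ∂μ, ‖x‖ ≤ D) (z : E) :
    ‖posteriorMean σ μ z‖ ≤ D := by
  have := isProbabilityMeasure_tilted (integrable_exp_gaussianExponent μ σ z)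
  simpa [posteriorMean] using norm_integral_le_of_norm_le_const
    ((tilted_absolutelyContinuous μ (gaussianExponent σ z)).ae_le hμ)

variable [SecondCountableTopology E]

theorem integrable_exp_gaussianExponent_smul_sub (hσ : σ ≠ 0) (z : E) :
    Integrable (fun x => exp (gaussianExponent σ z x) • (x - z)) μ := by
  have hcont : Continuous fun x => exp (gaussianExponent σ z x) • (x - z) :=
    (continuous_gaussianExponent σ z).rexp.smul (continuous_id.sub continuous_const)
  refine .of_bound hcont.aestronglyMeasurable |σ| (.of_forall fun x => ?_)
  rw [norm_smul, norm_of_nonneg (exp_nonneg _)]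
  exact exp_gaussianExponent_mul_norm_sub_le hσ

variable [CompleteSpace E]

theorem integral_exp_gaussianExponent_smul_sub [NeZero μ] (hσ : σ ≠ 0) (z : E) :
    ∫ x, exp (gaussianExponent σ z x) • (x - z) ∂μ =
      (∫ x, exp (gaussianExponent σ z x) ∂μ) • (posteriorMean σ μ z - z) := by
  have hint := integrable_exp_gaussianExponent μ σ z
  have := isProbabilityMeasure_tilted hint
  have hsub : Integrable (fun x => x - z) (μ.tilted (gaussianExponent σ z)) :=
    (integrable_tilted_iff hint _).2 (integrable_exp_gaussianExponent_smul_sub hσ z)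
  have hid : Integrable (fun x => x) (μ.tilted (gaussianExponent σ z)) := by
    simpa [Pi.add_def] using hsub.add (integrable_const z)
  have hmean : ∫ x, (x - z) ∂μ.tilted (gaussianExponent σ z) = posteriorMean σ μ z - z := by
    simp [integral_sub hid (integrable_const z), posteriorMean]
  rw [← hmean, integral_tilted, ← integral_smul]
  congr with x
  rw [smul_smul, mul_div_cancel₀ _ (integral_exp_pos hint).ne']

theorem hasGradientAt_integral_exp_gaussianExponent (hσ : σ ≠ 0) (z : E) :
    HasGradientAt (fun y => ∫ x, exp (gaussianExponent σ y x) ∂μ)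
      ((σ ^ 2)⁻¹ • ∫ x, exp (gaussianExponent σ z x) • (x - z) ∂μ) z := by
  have hint := (integrable_exp_gaussianExponent_smul_sub (μ := μ) hσ z).smul (σ ^ 2)⁻¹
  have hbound (x y : E) :
      ‖innerSL ℝ ((σ ^ 2)⁻¹ • exp (gaussianExponent σ y x) • (x - y))‖ ≤ (σ ^ 2)⁻¹ * |σ| := by
    rw [innerSL_apply_norm, norm_smul, norm_smul, norm_of_nonneg (exp_nonneg _),
      norm_of_nonneg (by positivity)]
    gcongr
    exact exp_gaussianExponent_mul_norm_sub_le hσ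
  have hderiv := hasFDerivAt_integral_of_dominated_of_fderiv_le univ_mem
    (.of_forall fun y => (integrable_exp_gaussianExponent μ σ y).aestronglyMeasurable)
    (integrable_exp_gaussianExponent μ σ z)
    ((innerSL ℝ).continuous.comp_aestronglyMeasurable hint.aestronglyMeasurable)
    (.of_forall fun x y _ => hbound x y) (integrable_const _)
    (.of_forall fun x y _ => hasFDerivAt_exp_gaussianExponent σ y x)
  refine hasGradientAt_iff_hasFDerivAt.2 (hderiv.congr_fderiv ?_)
  rw [← integral_smul]
  exact (innerSL ℝ).integral_comp_comm hint

theorem hasGradientAt_noisedDensity [NeZero μ] (hσ : σ ≠ 0) (z : E) :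
    HasGradientAt (noisedDensity c σ μ)
      (noisedDensity c σ μ z • (σ ^ 2)⁻¹ • (posteriorMean σ μ z - z)) z := by
  have hgrad := (hasGradientAt_integral_exp_gaussianExponent (μ := μ) hσ z).hasFDerivAt.const_mul c
  rw [integral_exp_gaussianExponent_smul_sub hσ z] at hgrad
  rw [hasGradientAt_iff_hasFDerivAt, noisedDensity_eq_mul_integral,
    funext (noisedDensity_eq_mul_integral c σ μ)]
  refine hgrad.congr_fderiv ?_
  simp [smul_smul, mul_comm, mul_left_comm]

theorem differentiable_noisedDensity (hσ : σ ≠ 0) : Differentiable ℝ (noisedDensity c σ μ) := by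
  rw [funext (noisedDensity_eq_mul_integral c σ μ)]
  exact fun z =>
    (hasGradientAt_integral_exp_gaussianExponent hσ z).differentiableAt.const_mul c

theorem score_noisedDensity [NeZero μ] (hc : 0 < c) (hσ : σ ≠ 0) (z : E) :
    score (noisedDensity c σ μ) z = (σ ^ 2)⁻¹ • (posteriorMean σ μ z - z) := by
  have hpos := (noisedDensity_pos (σ := σ) (μ := μ) hc z).ne'
  rw [score_eq_inv_smul_gradient (differentiable_noisedDensity hσ z) hpos,
    (hasGradientAt_noisedDensity hσ z).gradient, inv_smul_smul₀ hpos]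

theorem norm_scoreDerivative_noisedDensity_le {ρ ν : Measure E} [IsFiniteMeasure ρ] [NeZero ρ]
    [IsFiniteMeasure ν] [NeZero ν] {Dρ Dν : ℝ} (hc : 0 < c) (hσ : σ ≠ 0)
    (hρ : ∀ᵐ x ∂ρ, ‖x‖ ≤ Dρ) (hν : ∀ᵐ x ∂ν, ‖x‖ ≤ Dν) (z : E) :
    ‖scoreDerivative (noisedDensity c σ ρ) (noisedDensity c σ ν) z‖ ≤
      noisedDensity c σ ν z / noisedDensity c σ ρ z * ((Dρ + Dν) / σ ^ 2) := by
  have hratio : 0 < noisedDensity c σ ν z / noisedDensity c σ ρ z :=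
    div_pos (noisedDensity_pos hc z) (noisedDensity_pos hc z)
  have hscores : score (noisedDensity c σ ν) z - score (noisedDensity c σ ρ) z =
      (σ ^ 2)⁻¹ • (posteriorMean σ ν z - posteriorMean σ ρ z) := by
    rw [score_noisedDensity hc hσ, score_noisedDensity hc hσ, ← smul_sub, sub_sub_sub_cancel_right]
  have hmeans : ‖posteriorMean σ ν z - posteriorMean σ ρ z‖ ≤ Dρ + Dν := by
    rw [add_comm]
    exact norm_sub_le_of_le (norm_posteriorMean_le hν z) (norm_posteriorMean_le hρ z)
  rw [scoreDerivative, hscores, norm_smul, norm_smul, norm_of_nonneg hratio.le,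
    norm_of_nonneg (by positivity), div_eq_inv_mul (Dρ + Dν)]
  gcongr

theorem two_mul_norm_scoreDerivative_noisedDensity_le {ρ ν : Measure E} [IsFiniteMeasure ρ]
    [NeZero ρ] [IsFiniteMeasure ν] [NeZero ν] {Dρ Dν : ℝ} (hc : 0 < c) (hσ : σ ≠ 0)
    (hρ : ∀ᵐ x ∂ρ, ‖x‖ ≤ Dρ) (hν : ∀ᵐ x ∂ν, ‖x‖ ≤ Dν) (z : E) :
    2 * ‖scoreDerivative (noisedDensity c σ ρ) (noisedDensity c σ ν) z‖ ≤
      2 / noisedDensity c σ ρ z * (noisedDensity c σ ρ z / σ ^ 2 * (2 * Dρ + Dν) +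
        noisedDensity c σ ν z / σ ^ 2 * (2 * Dν + Dρ)) := by
  have hDρ := nonneg_of_ae_norm_le hρ
  have hDν := nonneg_of_ae_norm_le hν
  have hg := norm_scoreDerivative_noisedDensity_le hc hσ hρ hν z
  set p := noisedDensity c σ ρ z
  set q := noisedDensity c σ ν z
  have hp : 0 < p := noisedDensity_pos hc z
  have hq : 0 < q := noisedDensity_pos hc z
  have hrest : 0 ≤ (p * (2 * Dρ + Dν) + q * Dν) * 2 / (p * σ ^ 2) := by positivity
  calc _ ≤ 2 * (q / p * ((Dρ + Dν) / σ ^ 2)) := by gcongr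
    _ ≤ 2 * (q / p * ((Dρ + Dν) / σ ^ 2)) +
        (p * (2 * Dρ + Dν) + q * Dν) * 2 / (p * σ ^ 2) := le_add_of_nonneg_right hrest
    _ = _ := by
      field_simp
      ring

end Tweedie

end NoisedDensity

section FiniteDimensional

variable {E : Type*} [NormedAddCommGroup E] [InnerProductSpace ℝ E] [FiniteDimensional ℝ E]
  [MeasurableSpace E] [BorelSpace E]

theorem integrable_exp_neg_mul_sq_norm_add_mul_norm {b : ℝ} (hb : 0 < b) (a : ℝ) :
    Integrable fun z : E => exp (-b * ‖z‖ ^ 2 + a * ‖z‖) := by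
  have hgauss : Integrable fun z : E => exp (-(b / 2) * ‖z‖ ^ 2) :=
    .of_integral_ne_zero (by
      rw [GaussianFourier.integral_rexp_neg_mul_sq_norm (half_pos hb)]
      positivity)
  refine (hgauss.const_mul (exp (a ^ 2 / (2 * b)))).mono'
    (Continuous.aestronglyMeasurable (by fun_prop)) (.of_forall fun z => ?_)
  have hsq : 0 ≤ (b * ‖z‖ - a) ^ 2 / (2 * b) := by positivity
  have hsq_eq : (b * ‖z‖ - a) ^ 2 / (2 * b) =
      b / 2 * ‖z‖ ^ 2 - a * ‖z‖ + a ^ 2 / (2 * b) := by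
    field_simp
    ring
  rw [norm_of_nonneg (exp_nonneg _), ← exp_add, exp_le_exp]
  linarith

variable {ρ ν : Measure E} [IsFiniteMeasure ρ] [NeZero ρ] [IsFiniteMeasure ν] [NeZero ν]
  {Dρ Dν c σ : ℝ}

theorem integrable_sq_noisedDensity_div (hc : 0 < c) (hσ : σ ≠ 0) (hρ : ∀ᵐ x ∂ρ, ‖x‖ ≤ Dρ)
    (hν : ∀ᵐ x ∂ν, ‖x‖ ≤ Dν) :
    Integrable fun z => noisedDensity c σ ν z ^ 2 / noisedDensity c σ ρ z := by
  have hpm : Measurable (noisedDensity c σ ρ) :=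
    (differentiable_noisedDensity hσ).continuous.measurable
  have hqm : Measurable (noisedDensity c σ ν) :=
    (differentiable_noisedDensity hσ).continuous.measurable
  have hb : 0 < (2 * σ ^ 2)⁻¹ := by positivity
  refine ((integrable_exp_neg_mul_sq_norm_add_mul_norm hb ((2 * Dν + Dρ) / σ ^ 2)).const_mul
    (c * ν.real univ ^ 2 / ρ.real univ * exp (Dρ ^ 2 / (2 * σ ^ 2)))).mono'
    ((hqm.pow_const 2).div hpm).aestronglyMeasurable (.of_forall fun z => ?_)
  rw [norm_of_nonneg (div_nonneg (sq_nonneg _) (noisedDensity_pos hc z).le)]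
  exact sq_noisedDensity_div_le hc hρ hν z

theorem integrable_norm_sq_scoreDerivative_mul (hc : 0 < c) (hσ : σ ≠ 0)
    (hρ : ∀ᵐ x ∂ρ, ‖x‖ ≤ Dρ) (hν : ∀ᵐ x ∂ν, ‖x‖ ≤ Dν) :
    Integrable fun z =>
      ‖scoreDerivative (noisedDensity c σ ρ) (noisedDensity c σ ν) z‖ ^ 2 *
        noisedDensity c σ ρ z := by
  have hpm : Measurable (noisedDensity c σ ρ) :=
    (differentiable_noisedDensity hσ).continuous.measurable
  have hgm := measurable_scoreDerivative hpm
    (differentiable_noisedDensity (c := c) (μ := ν) hσ).continuous.measurable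
  refine ((integrable_sq_noisedDensity_div hc hσ hρ hν).const_mul
    (((Dρ + Dν) / σ ^ 2) ^ 2)).mono'
    ((hgm.norm.pow_const 2).mul hpm).aestronglyMeasurable (.of_forall fun z => ?_)
  have hpz : 0 < noisedDensity c σ ρ z := noisedDensity_pos hc z
  rw [norm_of_nonneg (by positivity)]
  calc ‖scoreDerivative (noisedDensity c σ ρ) (noisedDensity c σ ν) z‖ ^ 2 *
        noisedDensity c σ ρ z
      ≤ (noisedDensity c σ ν z / noisedDensity c σ ρ z * ((Dρ + Dν) / σ ^ 2)) ^ 2 *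
        noisedDensity c σ ρ z := by
        gcongr
        exact norm_scoreDerivative_noisedDensity_le hc hσ hρ hν z
    _ = ((Dρ + Dν) / σ ^ 2) ^ 2 *
        (noisedDensity c σ ν z ^ 2 / noisedDensity c σ ρ z) := by field_simp

theorem score_difference_quotients_converge_in_L2_general
    (hρ : ∀ᵐ x ∂ρ, ‖x‖ ≤ Dρ) (hν : ∀ᵐ x ∂ν, ‖x‖ ≤ Dν) (hc : 0 < c) (hσ : σ ≠ 0) {p q : E → ℝ}
    (hp : p = noisedDensity c σ ρ) (hq : q = noisedDensity c σ ν) :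
    (∀ z, Tendsto (fun h => scoreQuotient p q h z) (𝓝[>] 0) (𝓝 (scoreDerivative p q z))) ∧
    (∃ h₀ > 0, ∀ z h, 0 < h → h < h₀ →
      ‖scoreQuotient p q h z‖ ≤
        2 / p z * (p z / σ ^ 2 * (2 * Dρ + Dν) + q z / σ ^ 2 * (2 * Dν + Dρ))) ∧
    Tendsto (fun h => ∫ z, ‖scoreQuotient p q h z - scoreDerivative p q z‖ ^ 2 * p z)
      (𝓝[>] 0) (𝓝 0) := by
  have hp₀ (z) : 0 < p z := hp ▸ noisedDensity_pos hc z
  have hq₀ (z) : 0 < q z := hq ▸ noisedDensity_pos hc z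
  have hpd : Differentiable ℝ p := hp ▸ differentiable_noisedDensity hσ
  have hqd : Differentiable ℝ q := hq ▸ differentiable_noisedDensity hσ
  refine ⟨fun z => ?_, ⟨1 / 2, one_half_pos, fun z h h_pos h_lt => ?_⟩, ?_⟩
  · exact (tendsto_scoreQuotient (hpd z) (hqd z) (hp₀ z).ne' (hq₀ z).ne').mono_left
      (nhdsGT_le_nhdsNE 0)
  · refine (norm_scoreQuotient_le (hpd z) (hqd z) (hp₀ z) (hq₀ z) ⟨h_pos, h_lt⟩).trans ?_
    subst hp hq
    exact two_mul_norm_scoreDerivative_noisedDensity_le hc hσ hρ hν z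
  · refine tendsto_integral_norm_scoreQuotient_sub_sq hpd hqd hp₀ hq₀ ?_
    subst hp hq
    exact integrable_norm_sq_scoreDerivative_mul hc hσ hρ hν

end FiniteDimensional

theorem score_difference_quotients_converge_in_L2
    (d : ℕ) (ρ ν : Measure (EuclideanSpace ℝ (Fin d)))
    [IsProbabilityMeasure ρ] [IsProbabilityMeasure ν]
    (Dρ Dν : ℝ)
    (hρsupp : ρ (Metric.closedBall 0 Dρ)ᶜ = 0)
    (hνsupp : ν (Metric.closedBall 0 Dν)ᶜ = 0)
    (σ : ℝ) (hσ : 0 < σ)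
    (ρσ νσ : EuclideanSpace ℝ (Fin d) → ℝ)
    (hρσ : ∀ z, ρσ z =
      ∫ x, (2 * π * σ ^ 2) ^ (-(d : ℝ) / 2) * Real.exp (-‖z - x‖ ^ 2 / (2 * σ ^ 2)) ∂ρ)
    (hνσ : ∀ z, νσ z =
      ∫ x, (2 * π * σ ^ 2) ^ (-(d : ℝ) / 2) * Real.exp (-‖z - x‖ ^ 2 / (2 * σ ^ 2)) ∂ν)
    (s : ℝ → EuclideanSpace ℝ (Fin d) → EuclideanSpace ℝ (Fin d))
    (hs : ∀ η z, s η z = gradient (fun y => Real.log ((1 - η) * ρσ y + η * νσ y)) z)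
    (sν : EuclideanSpace ℝ (Fin d) → EuclideanSpace ℝ (Fin d))
    (hsν : ∀ z, sν z = gradient (fun y => Real.log (νσ y)) z)
    (g : EuclideanSpace ℝ (Fin d) → EuclideanSpace ℝ (Fin d))
    (hg : ∀ z, g z = (νσ z / ρσ z) • (sν z - s 0 z))
    (F : ℝ → EuclideanSpace ℝ (Fin d) → EuclideanSpace ℝ (Fin d))
    (hF : ∀ h z, F h z = h⁻¹ • (s h z - s 0 z))
    (G : EuclideanSpace ℝ (Fin d) → ℝ)
    (hG : ∀ z, G z = (2 / ρσ z) *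
      ((ρσ z / σ ^ 2) * (2 * Dρ + Dν) + (νσ z / σ ^ 2) * (2 * Dν + Dρ))) :
    (∀ z, Filter.Tendsto (fun h => F h z) (nhdsWithin 0 (Set.Ioi 0)) (nhds (g z))) ∧
    (∃ h₀ > (0 : ℝ), ∀ z, ∀ h : ℝ, 0 < h → h < h₀ → ‖F h z‖ ≤ G z) ∧
    Filter.Tendsto (fun h => ∫ z, ‖F h z - g z‖ ^ 2 * ρσ z)
      (nhdsWithin 0 (Set.Ioi 0)) (nhds 0) := by
  have hFq (h z) : F h z = scoreQuotient ρσ νσ h z := by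
    simp [hF, hs, scoreQuotient, score, mixture]
  have hgd (z) : g z = scoreDerivative ρσ νσ z := by
    simp [hg, hs, hsν, scoreDerivative, score]
  simp only [hFq, hgd, hG]
  exact score_difference_quotients_converge_in_L2_general
    (mem_of_superset (mem_ae_iff.2 hρsupp) fun _ => mem_closedBall_zero_iff.1)
    (mem_of_superset (mem_ae_iff.2 hνsupp) fun _ => mem_closedBall_zero_iff.1)
    (by positivity) hσ.ne' (funext hρσ) (funext hνσ)
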